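/- Let G be a finite connected simple graph on at least 4 vertices with gp_e(G) = m(G) − 1. Then there exists an edge e ∈ E(G) that lies on every diametral path of G. -/

import Mathlib

/-- `X` is an edge general position set of `G`: `X` consists of edges of `G` and every
shortest path of `G` contains at most two edges of `X`. -/
def SimpleGraph.IsEdgeGPSet {V : Type*} (G : SimpleGraph V) (X : Set (Sym2 V)) : Prop :=
  X ⊆ G.edgeSet ∧
    ∀ (u v : V) (p : G.Walk u v), p.IsPath → p.length = G.dist u v →
      (X ∩ {e | e ∈ p.edges}).ncard ≤ 2

/-- The edge general position number of `G`. -/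
noncomputable def SimpleGraph.egp {V : Type*} (G : SimpleGraph V) : ℕ :=
  sSup {n | ∃ X : Set (Sym2 V), G.IsEdgeGPSet X ∧ X.ncard = n}

/-!
If every geodesic had at most two edges, the whole edge set would be in general position; hence
`gp_e(G) < m(G)` forces a geodesic with three edges. When `gp_e(G) = m(G) - 1`, a largest edge
general position set misses a single edge `e`, and a geodesic avoiding `e` would have all of its
edges in that set, so it has at most two of them. Thus `e` lies on every geodesic with at least
three edges, in particular on every diametral path.
-/

section

variable {V : Type*} {G : SimpleGraph V}

theorem ncard_edgeSet_of_isTrail {u v : V} {p : G.Walk u v} (hp : p.IsTrail) :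
    p.edgeSet.ncard = p.length := by
  classical
  rw [← p.coe_edges_toFinset, Set.ncard_coe_finset, List.toFinset_card_of_nodup hp.edges_nodup,
    p.length_edges]

theorem isGreatest_egp (hG : G.edgeSet.Finite) :
    IsGreatest {n | ∃ X : Set (Sym2 V), G.IsEdgeGPSet X ∧ X.ncard = n} G.egp := by
  have bddAbove : BddAbove {n | ∃ X : Set (Sym2 V), G.IsEdgeGPSet X ∧ X.ncard = n} := by
    refine ⟨G.edgeSet.ncard, ?_⟩
    rintro _ ⟨X, hX, rfl⟩
    exact Set.ncard_le_ncard hX.1 hG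
  have isEdgeGPSet_empty : G.IsEdgeGPSet ∅ := ⟨Set.empty_subset _, by simp⟩
  exact ⟨Nat.sSup_mem ⟨_, ∅, isEdgeGPSet_empty, rfl⟩ bddAbove, fun _ hn ↦ le_csSup bddAbove hn⟩

theorem isEdgeGPSet_edgeSet (h : ∀ u v, G.dist u v ≤ 2) : G.IsEdgeGPSet G.edgeSet := by
  refine ⟨subset_rfl, fun u v p hp hdist ↦ ?_⟩
  calc (G.edgeSet ∩ p.edgeSet).ncard
      ≤ p.edgeSet.ncard := Set.ncard_le_ncard Set.inter_subset_right p.edges.finite_toSet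
    _ = G.dist u v := (ncard_edgeSet_of_isTrail hp.isTrail).trans hdist
    _ ≤ 2 := h u v

theorem exists_three_le_dist_of_egp_lt (h : G.egp < G.edgeSet.ncard) :
    ∃ u v, 3 ≤ G.dist u v := by
  by_contra! hdist
  have hE : G.IsEdgeGPSet G.edgeSet :=
    isEdgeGPSet_edgeSet fun u v ↦ Nat.le_of_lt_succ (hdist u v)
  have hfin : G.edgeSet.Finite := Set.finite_of_ncard_pos (Nat.zero_lt_of_lt h)
  exact h.not_ge ((isGreatest_egp hfin).2 ⟨_, hE, rfl⟩)

theorem three_le_diam_of_egp_lt (hdiam : G.ediam ≠ ⊤) (h : G.egp < G.edgeSet.ncard) :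
    3 ≤ G.diam := by
  obtain ⟨u, v, huv⟩ := exists_three_le_dist_of_egp_lt h
  exact huv.trans (SimpleGraph.dist_le_diam hdiam)

theorem length_le_two_of_edgeSet_subset {X : Set (Sym2 V)} (hX : G.IsEdgeGPSet X) {u v : V}
    {p : G.Walk u v} (hp : p.length = G.dist u v) (hpX : p.edgeSet ⊆ X) : p.length ≤ 2 := by
  have hpath : p.IsPath := p.isPath_of_length_eq_dist hp
  calc p.length = p.edgeSet.ncard := (ncard_edgeSet_of_isTrail hpath.isTrail).symm
    _ = (X ∩ p.edgeSet).ncard := by rw [Set.inter_eq_right.2 hpX]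
    _ ≤ 2 := hX.2 u v p hpath hp

theorem exists_isEdgeGPSet_edgeSet_sdiff_eq_singleton (h : G.egp + 1 = G.edgeSet.ncard) :
    ∃ X e, G.IsEdgeGPSet X ∧ G.edgeSet \ X = {e} := by
  have hfin : G.edgeSet.Finite := Set.finite_of_ncard_pos (by lia)
  obtain ⟨X, hX, hcard⟩ := (isGreatest_egp hfin).1
  have hsdiff : (G.edgeSet \ X).ncard = 1 := by
    have := Set.ncard_sdiff_add_ncard_of_subset hX.1 hfin
    lia
  obtain ⟨e, he⟩ := Set.ncard_eq_one.1 hsdiff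
  exact ⟨X, e, hX, he⟩

theorem exists_edge_on_every_diametral_path_general (h : G.egp + 1 = G.edgeSet.ncard) :
    ∃ e ∈ G.edgeSet, ∀ (u v : V) (p : G.Walk u v),
      p.length = G.dist u v → 3 ≤ G.dist u v → e ∈ p.edges := by
  obtain ⟨X, e, hX, he⟩ := exists_isEdgeGPSet_edgeSet_sdiff_eq_singleton h
  have heE : e ∈ G.edgeSet \ X := he ▸ Set.mem_singleton e
  refine ⟨e, heE.1, fun u v p hp hdist ↦ ?_⟩
  have hpX : ¬p.edgeSet ⊆ X := fun hpX ↦ by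
    have := length_le_two_of_edgeSet_subset hX hp hpX
    lia
  obtain ⟨f, hfp, hfX⟩ := Set.not_subset.1 hpX
  have hfe : f ∈ ({e} : Set (Sym2 V)) := he ▸ ⟨p.edges_subset_edgeSet hfp, hfX⟩
  exact Set.mem_singleton_iff.1 hfe ▸ hfp

theorem ncard_edgeSet_pos_of_connected [Finite V] [Nontrivial V] (hG : G.Connected) :
    0 < G.edgeSet.ncard := by
  rw [Set.ncard_pos, SimpleGraph.edgeSet_nonempty]
  rintro rfl
  exact SimpleGraph.not_connected_bot hG

end

/-- If `G` is a finite connected graph on at least 4 vertices with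
`gp_e(G) = m(G) - 1`, then some edge of `G` lies on every diametral path of `G`
(a diametral path is a shortest path whose length equals the diameter). -/
theorem exists_edge_on_every_diametral_path {V : Type*} [Fintype V] (G : SimpleGraph V)
    (hG : G.Connected) (hn : 4 ≤ Fintype.card V)
    (h : G.egp = G.edgeSet.ncard - 1) :
    ∃ e ∈ G.edgeSet, ∀ (u v : V) (p : G.Walk u v),
      p.IsPath → p.length = G.dist u v → G.dist u v = G.diam → e ∈ p.edges := by
  have : Nontrivial V := Fintype.one_lt_card_iff_nontrivial.1 (by lia)
  have hpos : 0 < G.edgeSet.ncard := ncard_edgeSet_pos_of_connected hG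
  have hdiam : 3 ≤ G.diam :=
    three_le_diam_of_egp_lt (SimpleGraph.connected_iff_ediam_ne_top.1 hG) (by lia)
  obtain ⟨e, he, hmem⟩ := exists_edge_on_every_diametral_path_general (G := G) (by lia)
  exact ⟨e, he, fun u v p _ hp huv ↦ hmem u v p hp (huv ▸ hdiam)⟩
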